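/- Under Assumption 1, and in the setting of the rounding definitions (F, x̄, s̄, b̄, y, small and large rows), there exists an integer vector x^S ∈ ℤ^n such that: (a) 0 ≤ x^S ≤ d; (b) c^T x^S ≤ 24γ·c^T x̄; and (c) for every small row i, Σ_j A^F[s]_{ij} x^S_j ≥ b^F_i. -/

import Mathlib

/-!
The proof is grouping and scaling. Write `sbar j = 2 ^ κ j` and group the columns by `κ`. For each
exponent `k`, the fractional vector `24 * xbar` restricted to the class `κ j = k` fits below `d`, so
the integrality gap, applied with the coverage of each row rounded down, gives an integer vector
`z k` supported on that class; this costs a factor `γ`. Gluing these vectors, `xS j = z (κ j) j`,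
yields the bounds and the cost.

For a small row with residual demand `β > 0` and `bbar i = 2 ^ B`, only the classes `k < B` are used.
Since `s j < 2 * sbar j`, replacing `s` by `sbar` at most halves the coverage, and the small columns
carry at least half of what is left, so `24 * xbar` covers at least `6 * β` through these classes.
Rounding down loses less than `2 ^ k` in class `k`, hence less than `2 ^ B < 2 * β` altogether.
Finally `2 ^ k ≤ β` for `k < B`, so truncating at `β` does not affect these columns.
-/

/-- The greatest power of two below `s` is more than half of `s`. -/
lemma lt_two_mul_of_max_pow {s t : ℤ} {k : ℕ} (ht : t = 2 ^ k)
    (hmax : ∀ k : ℕ, (2 : ℤ) ^ k ≤ s → (2 : ℤ) ^ k ≤ t) : s < 2 * t := by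
  by_contra! h
  have h1 := hmax (k + 1) (by rw [pow_succ]; linarith)
  have h2 : (0 : ℤ) < 2 ^ k := by positivity
  rw [pow_succ] at h1
  linarith

/-- The least power of two above `β ≥ 1` is less than `2 * β`. -/
lemma lt_two_mul_of_min_pow {β t : ℤ} {B : ℕ} (hβ : 0 < β) (ht : t = 2 ^ B)
    (hmin : ∀ k : ℕ, β ≤ 2 ^ k → t ≤ (2 : ℤ) ^ k) : t < 2 * β := by
  cases B with
  | zero => simp at ht; omega
  | succ B =>
    by_contra! h
    have h1 := hmin B (by rw [pow_succ] at ht; linarith)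
    have h2 : (0 : ℤ) < 2 ^ B := by positivity
    rw [pow_succ] at ht
    linarith

/-- Splitting a sum over the columns with `κ j < B` by the value of `κ`. -/
lemma sum_classes {n : ℕ} {R : Type*} [AddCommMonoid R] (κ : Fin n → ℕ) (B : ℕ) (f : Fin n → R) :
    ∑ j, (if κ j < B then f j else 0) =
      ∑ k ∈ Finset.range B, ∑ j, if κ j = k then f j else 0 := by
  rw [Finset.sum_comm]
  refine Finset.sum_congr rfl fun j _ => ?_
  rw [Finset.sum_ite_eq]
  simp

/-- The fractional coverage `x` in the classes `κ j < B`, rounded down class by class, loses less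
than `∑ k < B, 2 ^ k < 2 ^ B`. The coefficients `a` stand for a row of the matrix. -/
lemma coverage_of_class_floors {n : ℕ} (κ : Fin n → ℕ) (B : ℕ) (a : Fin n → ℤ) (x : Fin n → ℝ)
    (z : ℕ → Fin n → ℤ)
    (hz : ∀ k, ⌊∑ j, (a j : ℝ) * (if κ j = k then x j else 0)⌋ ≤
      ∑ j, a j * (if κ j = k then z k j else 0)) :
    ∑ j, (if κ j < B then (a j : ℝ) * 2 ^ κ j * x j else 0) - 2 ^ B ≤
      ((∑ j, (if κ j < B then a j * 2 ^ κ j * z (κ j) j else 0) : ℤ) : ℝ) := by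
  have hgeom : ∑ k ∈ Finset.range B, (2 : ℝ) ^ k ≤ 2 ^ B := by
    rw [geom_sum_eq (by norm_num)]; norm_num
  have hclass : ∀ k, (∑ j, if κ j = k then (a j : ℝ) * 2 ^ κ j * x j else 0) - 2 ^ k ≤
      ((∑ j, (if κ j = k then a j * 2 ^ κ j * z (κ j) j else 0) : ℤ) : ℝ) := by
    intro k
    have e1 : (∑ j, if κ j = k then (a j : ℝ) * 2 ^ κ j * x j else 0) =
        2 ^ k * ∑ j, (a j : ℝ) * (if κ j = k then x j else 0) := by
      rw [Finset.mul_sum]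
      refine Finset.sum_congr rfl fun j _ => ?_
      split_ifs with h
      · rw [h]; ring
      · ring
    have e2 : (∑ j, (if κ j = k then a j * 2 ^ κ j * z (κ j) j else 0)) =
        2 ^ k * ∑ j, a j * (if κ j = k then z k j else 0) := by
      rw [Finset.mul_sum]
      refine Finset.sum_congr rfl fun j _ => ?_
      split_ifs with h
      · rw [h]; ring
      · ring
    rw [e1, e2]
    have h1 := Int.lt_floor_add_one (∑ j, (a j : ℝ) * (if κ j = k then x j else 0))
    have h2 : ((⌊∑ j, (a j : ℝ) * (if κ j = k then x j else 0)⌋ : ℤ) : ℝ) ≤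
      ((∑ j, a j * (if κ j = k then z k j else 0) : ℤ) : ℝ) := by exact_mod_cast hz k
    have h3 : (0 : ℝ) < 2 ^ k := by positivity
    rw [Int.cast_mul, Int.cast_pow, Int.cast_ofNat]
    nlinarith
  rw [sum_classes, sum_classes, Int.cast_sum]
  calc _ ≤ (∑ k ∈ Finset.range B, ∑ j, if κ j = k then (a j : ℝ) * 2 ^ κ j * x j else 0) -
        ∑ k ∈ Finset.range B, (2 : ℝ) ^ k := by linarith
    _ ≤ _ := by
      rw [← Finset.sum_sub_distrib]
      exact Finset.sum_le_sum fun k _ => hclass k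


/-- `A[s]`: the column-restricted matrix whose `(i,j)` entry is `A i j * s j`. -/
def colRes {m n : ℕ} (A : Fin m → Fin n → ℤ) (s : Fin n → ℤ) (i : Fin m) (j : Fin n) : ℤ :=
  A i j * s j

/-- The residual demand `b^F_i = max {0, b_i - ∑_{j ∈ F} A[s]_{ij} d_j}`. -/
def resDemand {m n : ℕ} (A : Fin m → Fin n → ℤ) (s : Fin n → ℤ) (b : Fin m → ℤ)
    (d : Fin n → ℤ) (F : Finset (Fin n)) (i : Fin m) : ℤ :=
  max 0 (b i - ∑ j ∈ F, colRes A s i j * d j)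

/-- The residual matrix for a (possibly rounded) supply vector `s'`:
entry `(i,j)` is `min {A_{ij}·s'_j, b^F_i}` for `j ∉ F` and `0` for `j ∈ F`,
where `b^F` is the residual demand of the original instance. -/
def resMatrixWith {m n : ℕ} (A : Fin m → Fin n → ℤ) (s' : Fin n → ℤ) (b : Fin m → ℤ)
    (s : Fin n → ℤ) (d : Fin n → ℤ) (F : Finset (Fin n)) (i : Fin m) (j : Fin n) : ℤ :=
  if j ∈ F then 0 else min (A i j * s' j) (resDemand A s b d F i)

/-- Row `i` is *small* if the `i`-small columns `S_i = {j : A_{ij} = 1, s̄_j < b̄_i}` contribute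
strictly more to `∑_j A^F[s̄]_{ij} y_j` (with `y = 4x̄`) than the `i`-large columns
`L_i = {j : A_{ij} = 1, s̄_j ≥ b̄_i}`. -/
def SmallRow {m n : ℕ} (A : Fin m → Fin n → ℤ) (s : Fin n → ℤ) (b : Fin m → ℤ)
    (d : Fin n → ℤ) (F : Finset (Fin n)) (sbar : Fin n → ℤ) (bbar : Fin m → ℤ)
    (xbar : Fin n → ℝ) (i : Fin m) : Prop :=
  ∑ j ∈ Finset.univ.filter (fun j => A i j = 1 ∧ bbar i ≤ sbar j),
      (resMatrixWith A sbar b s d F i j : ℝ) * (4 * xbar j) <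
  ∑ j ∈ Finset.univ.filter (fun j => A i j = 1 ∧ sbar j < bbar i),
      (resMatrixWith A sbar b s d F i j : ℝ) * (4 * xbar j)

/-- Under Assumption 1 (integrality gap `γ` of the underlying 0,1-CIP),
in the rounding setting there is an integer vector `x^S` with `0 ≤ x^S ≤ d`,
`cᵀx^S ≤ 24γ·cᵀx̄`, covering every small row of the residual problem. -/
theorem small_rows_integral_solution (m n : ℕ) (hm : 0 < m) (hn : 0 < n)
    (A : Fin m → Fin n → ℤ) (hA : ∀ i j, A i j = 0 ∨ A i j = 1)
    (s : Fin n → ℤ) (hs : ∀ j, 1 ≤ s j)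
    (b : Fin m → ℤ) (hb : ∀ i, 0 ≤ b i)
    (c : Fin n → ℝ) (hc : ∀ j, 0 ≤ c j)
    (d : Fin n → ℤ) (hd : ∀ j, 0 ≤ d j)
    -- Assumption 1: integrality gap of the 0,1-CIP is γ
    (γ : ℝ) (hγ : 1 ≤ γ)
    (hAsm1 : ∀ (b' : Fin m → ℤ) (c' : Fin n → ℝ) (d' : Fin n → ℤ),
      (∀ i, 0 ≤ b' i) → (∀ j, 0 ≤ c' j) → (∀ j, 0 ≤ d' j) →
      ∀ x' : Fin n → ℝ,
        (∀ i, (b' i : ℝ) ≤ ∑ j, (A i j : ℝ) * x' j) →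
        (∀ j, 0 ≤ x' j ∧ x' j ≤ (d' j : ℝ)) →
        ∃ z : Fin n → ℤ,
          (∀ i, b' i ≤ ∑ j, A i j * z j) ∧
          (∀ j, 0 ≤ z j ∧ z j ≤ d' j) ∧
          ∑ j, c' j * (z j : ℝ) ≤ γ * ∑ j, c' j * x' j)
    -- the rounding setting
    (F : Finset (Fin n))
    (xbar : Fin n → ℝ)
    (hbar0 : ∀ j, 0 ≤ xbar j) (hbard : ∀ j, xbar j ≤ (d j : ℝ) / 24)
    (hbarF : ∀ j ∈ F, xbar j = 0)
    (hbarcov : ∀ i, (resDemand A s b d F i : ℝ) ≤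
      ∑ j, (resMatrixWith A s b s d F i j : ℝ) * xbar j)
    (sbar : Fin n → ℤ)
    (hsbar : ∀ j, (∃ k : ℕ, sbar j = 2 ^ k) ∧ sbar j ≤ s j ∧
      ∀ k : ℕ, (2 : ℤ) ^ k ≤ s j → (2 : ℤ) ^ k ≤ sbar j)
    (bbar : Fin m → ℤ)
    (hbbar0 : ∀ i, resDemand A s b d F i = 0 → bbar i = 0)
    (hbbar : ∀ i, 0 < resDemand A s b d F i →
      (∃ k : ℕ, bbar i = 2 ^ k) ∧ resDemand A s b d F i ≤ bbar i ∧
      ∀ k : ℕ, resDemand A s b d F i ≤ 2 ^ k → bbar i ≤ (2 : ℤ) ^ k) :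
    ∃ xS : Fin n → ℤ,
      (∀ j, 0 ≤ xS j ∧ xS j ≤ d j) ∧
      (∑ j, c j * (xS j : ℝ) ≤ 24 * γ * ∑ j, c j * xbar j) ∧
      (∀ i, SmallRow A s b d F sbar bbar xbar i →
        resDemand A s b d F i ≤ ∑ j, resMatrixWith A s b s d F i j * xS j) := by
  choose hpow hle hmax using hsbar
  choose κ hκ using hpow
  -- the integral solution of the class `κ j = k`; the bound `d'` vanishes outside that class
  have hclass : ∀ k : ℕ, ∃ z : Fin n → ℤ,
      (∀ i, ⌊∑ j, (A i j : ℝ) * (if κ j = k then 24 * xbar j else 0)⌋ ≤ ∑ j, A i j * z j) ∧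
      (∀ j, 0 ≤ z j ∧ z j ≤ if κ j = k ∧ j ∉ F then d j else 0) ∧
      ∑ j, c j * (z j : ℝ) ≤ γ * ∑ j, c j * (if κ j = k then 24 * xbar j else 0) := by
    intro k
    refine hAsm1 _ c _ (fun i => ?_) hc (fun j => ?_) _ (fun i => Int.floor_le _) (fun j => ?_)
    · refine Int.floor_nonneg.2 (Finset.sum_nonneg fun j _ => mul_nonneg ?_ ?_)
      · rcases hA i j with h | h <;> simp [h]
      · have := hbar0 j
        split_ifs <;> linarith
    · have := hd j
      split_ifs <;> omega
    · have h0 := hbar0 j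
      have h1 := hbard j
      by_cases hF : j ∈ F
      · simp [hbarF j hF, hF]
      · by_cases hk : κ j = k
        · simp only [hk, hF, if_true, not_false_eq_true, and_self]
          constructor <;> linarith
        · simp [hk]
  choose z hzcov hzbd hzcost using hclass
  have hzero : ∀ k j, κ j ≠ k → z k j = 0 := by
    intro k j h
    have := hzbd k j
    simp only [h, false_and, if_false] at this
    omega
  have hzeroF : ∀ k, ∀ j ∈ F, z k j = 0 := by
    intro k j h
    have := hzbd k j
    simp only [h, not_true_eq_false, and_false, if_false] at this
    omega
  have hzite : ∀ k j, (if κ j = k then z k j else 0) = z k j := by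
    intro k j
    split_ifs with h
    · rfl
    · exact (hzero k j h).symm
  refine ⟨fun j => z (κ j) j, fun j => ⟨(hzbd _ j).1, ?_⟩, ?_, ?_⟩
  · have h1 := (hzbd (κ j) j).2
    have h2 := hd j
    show z (κ j) j ≤ d j
    split_ifs at h1 <;> omega
  · obtain ⟨K, hK⟩ : ∃ K, ∀ j, κ j < K :=
      ⟨Finset.univ.sup κ + 1, fun j => Nat.lt_succ_of_le (Finset.le_sup (Finset.mem_univ j))⟩
    have hsplit : ∀ f : Fin n → ℝ,
        ∑ j, f j = ∑ k ∈ Finset.range K, ∑ j, if κ j = k then f j else 0 := by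
      intro f
      rw [← sum_classes]
      simp [hK]
    rw [hsplit, hsplit, Finset.mul_sum]
    refine Finset.sum_le_sum fun k _ => ?_
    calc (∑ j, if κ j = k then c j * (z (κ j) j : ℝ) else 0) = ∑ j, c j * (z k j : ℝ) := by
          refine Finset.sum_congr rfl fun j _ => ?_
          split_ifs with h
          · rw [h]
          · simp [hzero k j h]
      _ ≤ _ := hzcost k
      _ = _ := by
          rw [Finset.mul_sum, Finset.mul_sum]
          refine Finset.sum_congr rfl fun j _ => ?_
          split_ifs <;> ring
  · intro i hsmall
    set β := resDemand A s b d F i with hβdef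
    have hβ0 : 0 ≤ β := le_max_left _ _
    have hxS0 : ∀ j, 0 ≤ z (κ j) j := fun j => (hzbd _ j).1
    have hA0 : ∀ j, 0 ≤ A i j := fun j => by rcases hA i j with h | h <;> omega
    rcases hβ0.eq_or_lt with hβ | hβ
    · rw [← hβ]
      refine Finset.sum_nonneg fun j _ => mul_nonneg ?_ (hxS0 j)
      unfold resMatrixWith
      split_ifs
      · exact le_rfl
      · exact le_min (mul_nonneg (hA0 j) (by linarith [hs j])) hβ0
    obtain ⟨⟨B, hB⟩, -, hmin⟩ := hbbar i hβ
    have hB2 : bbar i < 2 * β := lt_two_mul_of_min_pow hβ hB hmin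
    have hlt : ∀ j, sbar j < bbar i ↔ κ j < B := by
      intro j
      rw [hκ j, hB]
      exact pow_lt_pow_iff_right₀ (by norm_num)
    have hsβ : ∀ j, κ j < B → 2 ^ κ j ≤ β := by
      intro j hj
      have h1 : (2 : ℤ) ^ (κ j + 1) ≤ 2 ^ B := pow_le_pow_right₀ (by norm_num) hj
      rw [pow_succ] at h1
      linarith
    -- rounding `s` to `sbar` at most halves the coverage
    have hhalf : (β : ℝ) ≤ 2 * ∑ j, (resMatrixWith A sbar b s d F i j : ℝ) * xbar j := by
      refine (hbarcov i).trans ?_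
      rw [Finset.mul_sum]
      refine Finset.sum_le_sum fun j _ => ?_
      have : resMatrixWith A s b s d F i j ≤ 2 * resMatrixWith A sbar b s d F i j := by
        have h1 := lt_two_mul_of_max_pow (hκ j) (hmax j)
        unfold resMatrixWith
        rw [← hβdef]
        split_ifs
        · simp
        · rcases hA i j with h | h <;> simp only [h, zero_mul, one_mul] <;> omega
      have h2 : (resMatrixWith A s b s d F i j : ℝ) ≤ 2 * resMatrixWith A sbar b s d F i j := by
        exact_mod_cast this
      nlinarith [hbar0 j]
    -- the small columns carry more than half of the rounded coverage
    have hfrac : (β : ℝ) ≤ 4 * ∑ j, (if κ j < B then (A i j : ℝ) * 2 ^ κ j * xbar j else 0) := by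
      have hsplit : ∑ j, (resMatrixWith A sbar b s d F i j : ℝ) * (4 * xbar j) =
          ∑ j ∈ Finset.univ.filter (fun j => A i j = 1 ∧ bbar i ≤ sbar j),
            (resMatrixWith A sbar b s d F i j : ℝ) * (4 * xbar j) +
          ∑ j ∈ Finset.univ.filter (fun j => A i j = 1 ∧ sbar j < bbar i),
            (resMatrixWith A sbar b s d F i j : ℝ) * (4 * xbar j) := by
        rw [Finset.sum_filter, Finset.sum_filter, ← Finset.sum_add_distrib]
        refine Finset.sum_congr rfl fun j _ => ?_
        rcases hA i j with h | h
        · have : resMatrixWith A sbar b s d F i j = 0 := by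
            unfold resMatrixWith
            rw [← hβdef, h, zero_mul, min_eq_left hβ0, ite_self]
          simp [this]
        · by_cases h' : sbar j < bbar i
          · simp [h, h', not_le.2 h']
          · simp [h, h', not_lt.1 h']
      have hsm : ∑ j ∈ Finset.univ.filter (fun j => A i j = 1 ∧ sbar j < bbar i),
            (resMatrixWith A sbar b s d F i j : ℝ) * (4 * xbar j) ≤
          4 * ∑ j, (if κ j < B then (A i j : ℝ) * 2 ^ κ j * xbar j else 0) := by
        rw [Finset.sum_filter, Finset.mul_sum]
        refine Finset.sum_le_sum fun j _ => ?_
        have hx := hbar0 j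
        have hA' : (0 : ℝ) ≤ A i j := by exact_mod_cast hA0 j
        by_cases h : κ j < B
        · have hp : (0 : ℝ) ≤ (A i j : ℝ) * 2 ^ κ j := by positivity
          have hle' : resMatrixWith A sbar b s d F i j ≤ A i j * 2 ^ κ j := by
            unfold resMatrixWith
            split_ifs
            · exact mul_nonneg (hA0 j) (by positivity)
            · rw [hκ j]; exact min_le_left _ _
          have hle'' : (resMatrixWith A sbar b s d F i j : ℝ) ≤ A i j * 2 ^ κ j := by
            exact_mod_cast hle'
          rw [if_pos h]
          split_ifs
          · nlinarith
          · positivity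
        · simp [hlt, h]
      have h4 : ∑ j, (resMatrixWith A sbar b s d F i j : ℝ) * (4 * xbar j) =
          4 * ∑ j, (resMatrixWith A sbar b s d F i j : ℝ) * xbar j := by
        rw [Finset.mul_sum]
        exact Finset.sum_congr rfl fun j _ => by ring
      unfold SmallRow at hsmall
      linarith
    have hround := coverage_of_class_floors κ B (A i) (fun j => 24 * xbar j) z (fun k => by
      simpa only [hzite] using hzcov k i)
    have h24 : ∑ j, (if κ j < B then (A i j : ℝ) * 2 ^ κ j * (24 * xbar j) else 0) =
        24 * ∑ j, (if κ j < B then (A i j : ℝ) * 2 ^ κ j * xbar j else 0) := by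
      rw [Finset.mul_sum]
      refine Finset.sum_congr rfl fun j _ => ?_
      split_ifs <;> ring
    -- on the small columns the truncation at `β` is inactive
    have htrunc : ∑ j, (if κ j < B then A i j * 2 ^ κ j * z (κ j) j else 0) ≤
        ∑ j, resMatrixWith A s b s d F i j * z (κ j) j := by
      refine Finset.sum_le_sum fun j _ => ?_
      by_cases hF : j ∈ F
      · simp [hzeroF _ j hF]
      · unfold resMatrixWith
        rw [if_neg hF, ← hβdef]
        have hs0 : (0 : ℤ) ≤ s j := by linarith [hs j]
        split_ifs with h
        · refine mul_le_mul_of_nonneg_right (le_min ?_ ?_) (hxS0 j)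
          · exact mul_le_mul_of_nonneg_left (hκ j ▸ hle j) (hA0 j)
          · rcases hA i j with h' | h' <;> simp only [h', zero_mul, one_mul]
            · exact hβ0
            · exact hsβ j h
        · exact mul_nonneg (le_min (mul_nonneg (hA0 j) hs0) hβ0) (hxS0 j)
    refine le_trans ?_ htrunc
    have hB3 : (2 : ℝ) ^ B < 2 * β := by
      have : (2 : ℤ) ^ B < 2 * β := hB ▸ hB2
      exact_mod_cast this
    have hβR : (0 : ℝ) < β := by exact_mod_cast hβ
    rw [h24] at hround
    rw [← Int.cast_le (R := ℝ)]
    linarith
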